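/- Let M, Y_1,…,Y_n, Z_1,…,Z_n be random variables with values in finite sets, jointly distributed according to pmfs P and Q, and suppose D(P_{M Y^i Z_{i+1}^n} ‖ Q_{M Y^i Z_{i+1}^n}) < ∞ for every 0 ≤ i ≤ n (where Y^i = (Y_1,…,Y_i) and Z_{i+1}^n = (Z_{i+1},…,Z_n)). Setting U_i := (M, Y^{i−1}, Z_{i+1}^n), it holds that D(P_{M Y^n} ‖ Q_{M Y^n}) − D(P_{M Z^n} ‖ Q_{M Z^n}) = ∑_{i=1}^n [ D(P_{U_i Y_i} ‖ Q_{U_i Y_i}) − D(P_{U_i Z_i} ‖ Q_{U_i Z_i}) ]. -/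

import Mathlib

open scoped BigOperators

noncomputable section

open Classical in
/-- Pushforward of a finitely supported mass function along a map. -/
def pushf {Ω α : Type*} [Fintype Ω] (p : Ω → ℝ) (f : Ω → α) : α → ℝ :=
  fun a => ∑ ω, if f ω = a then p ω else 0

/-- `p` is a probability mass function. -/
def IsPMF {α : Type*} [Fintype α] (p : α → ℝ) : Prop :=
  (∀ a, 0 ≤ p a) ∧ ∑ a, p a = 1

/-- Kullback–Leibler divergence `D(p‖q)` of mass functions, valued in `EReal`
(equal to `⊤` if `p` is not absolutely continuous w.r.t. `q`). -/
def klDiv {α : Type*} [Fintype α] (p q : α → ℝ) : EReal :=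
  if ∀ a, q a = 0 → p a = 0 then ((∑ a, p a * Real.log (p a / q a) : ℝ) : EReal) else ⊤

/-- Shannon entropy. -/
def entropy {α : Type*} [Fintype α] (p : α → ℝ) : ℝ :=
  -∑ a, p a * Real.log (p a)

/-- Conditional mutual information `I(A;B|C)` under the mass function `p`. -/
def condMI {Ω α β γ : Type*} [Fintype Ω] [Fintype α] [Fintype β] [Fintype γ]
    (p : Ω → ℝ) (A : Ω → α) (B : Ω → β) (C : Ω → γ) : ℝ :=
  entropy (pushf p (fun ω => (A ω, C ω))) + entropy (pushf p (fun ω => (B ω, C ω)))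
    - entropy (pushf p (fun ω => (A ω, B ω, C ω))) - entropy (pushf p C)

/-- First marginal of a joint mass function. -/
def margFst {α β : Type*} [Fintype α] [Fintype β] (p : α × β → ℝ) : α → ℝ :=
  fun a => ∑ b, p (a, b)

/-- Conditional mass function of the second coordinate given the first. -/
def condSnd {α β : Type*} [Fintype α] [Fintype β] (p : α × β → ℝ) : α → β → ℝ :=
  fun a b => p (a, b) / margFst p a

/-- Output distribution of a channel on an input distribution. -/
def outDist {α β : Type*} [Fintype α] [Fintype β] (ch : α → β → ℝ) (pa : α → ℝ) : β → ℝ :=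
  fun b => ∑ a, pa a * ch a b

/-- The difference functional
`f(P'_X) = sup_{Q̂_X ≪ Q_X} D(P'_Y‖Q̂_Y) − D(P'_Z‖Q̂_Z)`. -/
def fdiff {X Y Z : Type*} [Fintype X] [Fintype Y] [Fintype Z]
    (pYgX : X → Y → ℝ) (pZgX : X → Z → ℝ) (qYgX : X → Y → ℝ) (qZgX : X → Z → ℝ)
    (qX : X → ℝ) (pX' : X → ℝ) : EReal :=
  sSup {d : EReal | ∃ qhX : X → ℝ, IsPMF qhX ∧ (∀ x, qX x = 0 → qhX x = 0) ∧
    d = klDiv (outDist pYgX pX') (outDist qYgX qhX)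
        - klDiv (outDist pZgX pX') (outDist qZgX qhX)}

/-- The quantity `G_{P_XY, Q_XY, P_XZ, Q_XZ}(R)`: the supremum over finite sets `𝒰`
(represented by `Fin m`) and channels `P_{U|X}` with `I_P(U;X|Y) ≤ R` and `I_P(U;X|Z) ≤ R`
of `∑_u P_U(u) f(P_{X|U}(·|u))`. -/
def Gexp {X Y Z : Type*} [Fintype X] [Fintype Y] [Fintype Z]
    (pXY : X × Y → ℝ) (qXY : X × Y → ℝ) (pXZ : X × Z → ℝ) (qXZ : X × Z → ℝ)
    (R : ℝ) : EReal :=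
  sSup {v : EReal | ∃ (m : ℕ) (ch : X → Fin m → ℝ),
    (∀ x, IsPMF (ch x)) ∧
    condMI (fun w : Fin m × X × Y => ch w.2.1 w.1 * pXY (w.2.1, w.2.2))
      (fun w => w.1) (fun w => w.2.1) (fun w => w.2.2) ≤ R ∧
    condMI (fun w : Fin m × X × Z => ch w.2.1 w.1 * pXZ (w.2.1, w.2.2))
      (fun w => w.1) (fun w => w.2.1) (fun w => w.2.2) ≤ R ∧
    v = ∑ u : Fin m,
      ((∑ x, ch x u * margFst pXY x : ℝ) : EReal) *
        fdiff (condSnd pXY) (condSnd pXZ) (condSnd qXY) (condSnd qXZ)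
          (margFst qXY)
          (fun x => ch x u * margFst pXY x / ∑ x', ch x' u * margFst pXY x')}

/-- The error exponent of distributed hypothesis testing, via the Ahlswede–Csiszár
multi-letter characterization. -/
def errExp {X W : Type*} [Fintype X] [Fintype W]
    (pXW qXW : X × W → ℝ) (R : ℝ) : EReal :=
  sSup {v : EReal | ∃ n : ℕ, 0 < n ∧
    ∃ κ : (Fin n → X) → Fin (2 ^ ⌊(n : ℝ) * R⌋₊) → ℝ,
      (∀ x, IsPMF (κ x)) ∧
      v = (((n : ℝ)⁻¹ : ℝ) : EReal) *
        klDiv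
          (fun mw : Fin (2 ^ ⌊(n : ℝ) * R⌋₊) × (Fin n → W) =>
            ∑ x : Fin n → X, (∏ i, pXW (x i, mw.2 i)) * κ x mw.1)
          (fun mw : Fin (2 ^ ⌊(n : ℝ) * R⌋₊) × (Fin n → W) =>
            ∑ x : Fin n → X, (∏ i, qXW (x i, mw.2 i)) * κ x mw.1)}

/-!
The divergence between the laws of a random variable `X` under `P` and `Q` depends only on the
partition of the sample space into level sets of `X`. The pairs `(U_i, Y_i)` and `(U_i, Z_i)` have
the same level sets as the consecutive hybrids `(M, Y^i, Z_{i+1}^n)` and `(M, Y^{i-1}, Z_i^n)`, so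
the right-hand side telescopes along the hybrids; finiteness of the divergences makes the
cancellation legitimate in `EReal`.
-/

open scoped NNReal

section Law

variable {Ω α β : Type*} [Fintype Ω]

lemma pushf_apply_congr (p : Ω → ℝ) {X : Ω → α} {X' : Ω → β}
    (h : ∀ ω ω', X ω = X ω' ↔ X' ω = X' ω') (ω : Ω) :
    pushf p X (X ω) = pushf p X' (X' ω) := by
  classical exact Finset.sum_congr rfl fun _ _ ↦ if_congr (h _ _) rfl rfl

lemma pushf_eq_zero_of_notMem_range (p : Ω → ℝ) {X : Ω → α} {a : α} (ha : a ∉ Set.range X) :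
    pushf p X a = 0 :=
  Finset.sum_eq_zero fun ω _ ↦ if_neg fun hω ↦ ha ⟨ω, hω⟩

lemma forall_pushf_eq_zero_imp_iff (p q : Ω → ℝ) (X : Ω → α) :
    (∀ a, pushf q X a = 0 → pushf p X a = 0) ↔
      ∀ ω, pushf q X (X ω) = 0 → pushf p X (X ω) = 0 := by
  refine ⟨fun h ω ↦ h (X ω), fun h a hq ↦ ?_⟩
  by_cases ha : a ∈ Set.range X
  · obtain ⟨ω, rfl⟩ := ha
    exact h ω hq
  · exact pushf_eq_zero_of_notMem_range p ha

lemma sum_pushf_mul [Fintype α] (p : Ω → ℝ) (X : Ω → α) (F : α → ℝ) :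
    ∑ a, pushf p X a * F a = ∑ ω, p ω * F (X ω) := by
  classical
  simp only [pushf, Finset.sum_mul, ite_mul, zero_mul]
  rw [Finset.sum_comm]
  exact Finset.sum_congr rfl fun ω _ ↦ by simp

/-- The divergence `D(P_X‖Q_X)` between the laws of the random variable `X` under the finite
measures with mass functions `P` and `Q`. Masses are valued in `ℝ≥0` because `klDiv` is a
divergence only for nonnegative functions: `Real.log` has junk values at negative numbers. -/
def lawKLDiv [Fintype α] (P Q : Ω → ℝ≥0) (X : Ω → α) : EReal :=
  klDiv (pushf (fun ω ↦ (P ω : ℝ)) X) (pushf (fun ω ↦ (Q ω : ℝ)) X)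

lemma lawKLDiv_congr [Fintype α] [Fintype β] (P Q : Ω → ℝ≥0) {X : Ω → α} {X' : Ω → β}
    (h : ∀ ω ω', X ω = X ω' ↔ X' ω = X' ω') :
    lawKLDiv P Q X = lawKLDiv P Q X' := by
  simp only [lawKLDiv, klDiv, forall_pushf_eq_zero_imp_iff, sum_pushf_mul,
    pushf_apply_congr _ h]

end Law

lemma klDiv_ne_bot {α : Type*} [Fintype α] (p q : α → ℝ) : klDiv p q ≠ ⊥ := by
  unfold klDiv
  split_ifs
  exacts [EReal.coe_ne_bot _, top_ne_bot]

lemma ereal_sum_range_sub (A : ℕ → EReal) (n : ℕ) (hA : ∀ i ≤ n, A i ≠ ⊤ ∧ A i ≠ ⊥) :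
    ∑ i ∈ Finset.range n, (A (i + 1) - A i) = A n - A 0 := by
  induction n with
  | zero => simp [EReal.sub_self (hA 0 le_rfl).1 (hA 0 le_rfl).2]
  | succ n ih =>
    rw [Finset.sum_range_succ, ih fun i hi ↦ hA i (hi.trans n.le_succ)]
    lift A 0 to ℝ using hA 0 (Nat.zero_le _) with a₀
    lift A n to ℝ using hA n n.le_succ with aₙ
    lift A (n + 1) to ℝ using hA (n + 1) le_rfl with b
    norm_cast
    exact sub_add_sub_cancel' aₙ a₀ b

section Hybrid

variable {Ω α : Type*} {n : ℕ} {β γ : Fin n → Type*}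
  (M : Ω → α) (Y : ∀ j, Ω → β j) (Z : ∀ j, Ω → γ j)

/-- The hybrid `(M, Y^i, Z_{i+1}^n)` interpolating between `(M, Z^n)` at `i = 0` and `(M, Y^n)` at
`i = n`. Indices in `Fin n` start at `0`, so `Y^i` consists of the `Y j` with `j < i`. -/
def hybrid (i : ℕ) (ω : Ω) :
    α × (∀ j : {j : Fin n // (j : ℕ) < i}, β j) × (∀ j : {j : Fin n // i ≤ (j : ℕ)}, γ j) :=
  (M ω, fun j ↦ Y j ω, fun j ↦ Z j ω)

/-- The variable `U_i = (M, Y^{i-1}, Z_{i+1}^n)` common to two consecutive hybrids. Here `i` counts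
from `0`, so adjoining `Z i` gives `hybrid M Y Z i` and adjoining `Y i` gives
`hybrid M Y Z (i + 1)`. -/
def hybridCore (i : ℕ) (ω : Ω) :
    α × (∀ j : {j : Fin n // (j : ℕ) < i}, β j) × (∀ j : {j : Fin n // i < (j : ℕ)}, γ j) :=
  (M ω, fun j ↦ Y j ω, fun j ↦ Z j ω)

variable {M Y Z} {ω ω' : Ω}

lemma hybrid_eq_iff {i : ℕ} :
    hybrid M Y Z i ω = hybrid M Y Z i ω' ↔
      M ω = M ω' ∧ (∀ j : Fin n, (j : ℕ) < i → Y j ω = Y j ω') ∧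
        ∀ j : Fin n, i ≤ (j : ℕ) → Z j ω = Z j ω' := by
  simp only [hybrid, Prod.mk.injEq, funext_iff, Subtype.forall]

lemma hybridCore_eq_iff {i : ℕ} :
    hybridCore M Y Z i ω = hybridCore M Y Z i ω' ↔
      M ω = M ω' ∧ (∀ j : Fin n, (j : ℕ) < i → Y j ω = Y j ω') ∧
        ∀ j : Fin n, i < (j : ℕ) → Z j ω = Z j ω' := by
  simp only [hybridCore, Prod.mk.injEq, funext_iff, Subtype.forall]

lemma hybrid_zero_eq_iff :
    hybrid M Y Z 0 ω = hybrid M Y Z 0 ω' ↔ (M ω, (Z · ω)) = (M ω', (Z · ω')) := by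
  simp [hybrid_eq_iff, funext_iff]

lemma hybrid_last_eq_iff :
    hybrid M Y Z n ω = hybrid M Y Z n ω' ↔ (M ω, (Y · ω)) = (M ω', (Y · ω')) := by
  simp [hybrid_eq_iff, funext_iff]

lemma hybrid_eq_iff_hybridCore (i : Fin n) :
    hybrid M Y Z i ω = hybrid M Y Z i ω' ↔
      (hybridCore M Y Z i ω, Z i ω) = (hybridCore M Y Z i ω', Z i ω') := by
  simp only [hybrid_eq_iff, hybridCore_eq_iff, Prod.mk.injEq, le_iff_lt_or_eq, or_imp,
    forall_and, Fin.val_inj, forall_eq', and_assoc]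

lemma hybrid_succ_eq_iff_hybridCore (i : Fin n) :
    hybrid M Y Z (i + 1) ω = hybrid M Y Z (i + 1) ω' ↔
      (hybridCore M Y Z i ω, Y i ω) = (hybridCore M Y Z i ω', Y i ω') := by
  simp only [hybrid_eq_iff, hybridCore_eq_iff, Prod.mk.injEq, Nat.lt_succ_iff_lt_or_eq,
    Nat.succ_le_iff, or_imp, forall_and, Fin.val_inj, forall_eq]
  tauto

end Hybrid

theorem telescoping_klDiv_general {Ω α : Type*} {n : ℕ} {β γ : Fin n → Type*} [Fintype Ω]
    [Fintype α] [∀ j, Fintype (β j)] [∀ j, Fintype (γ j)] (P Q : Ω → ℝ≥0)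
    (M : Ω → α) (Y : ∀ j, Ω → β j) (Z : ∀ j, Ω → γ j)
    (hfin : ∀ i ≤ n, lawKLDiv P Q (hybrid M Y Z i) < ⊤) :
    lawKLDiv P Q (fun ω ↦ (M ω, (Y · ω))) - lawKLDiv P Q (fun ω ↦ (M ω, (Z · ω))) =
      ∑ i : Fin n, (lawKLDiv P Q (fun ω ↦ (hybridCore M Y Z i ω, Y i ω)) -
        lawKLDiv P Q (fun ω ↦ (hybridCore M Y Z i ω, Z i ω))) := by
  let D (i : ℕ) : EReal := lawKLDiv P Q (hybrid M Y Z i)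
  have hD (i : ℕ) (hi : i ≤ n) : D i ≠ ⊤ ∧ D i ≠ ⊥ := ⟨(hfin i hi).ne, klDiv_ne_bot _ _⟩
  calc
    _ = D n - D 0 :=
      (congrArg₂ (· - ·) (lawKLDiv_congr P Q fun _ _ ↦ hybrid_last_eq_iff)
        (lawKLDiv_congr P Q fun _ _ ↦ hybrid_zero_eq_iff)).symm
    _ = ∑ i : Fin n, (D (i + 1) - D i) := by
      rw [← ereal_sum_range_sub D n hD, Finset.sum_range]
    _ = _ := Finset.sum_congr rfl fun i _ ↦
      congrArg₂ (· - ·) (lawKLDiv_congr P Q fun _ _ ↦ hybrid_succ_eq_iff_hybridCore i)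
        (lawKLDiv_congr P Q fun _ _ ↦ hybrid_eq_iff_hybridCore i)

/-- Telescoping identity: with `U_i = (M, Y^{i-1}, Z_{i+1}^n)`,
`D(P_{MY^n}‖Q_{MY^n}) − D(P_{MZ^n}‖Q_{MZ^n})
  = ∑_i [D(P_{U_iY_i}‖Q_{U_iY_i}) − D(P_{U_iZ_i}‖Q_{U_iZ_i})]`,
provided all the hybrid divergences `D(P_{MY^iZ_{i+1}^n}‖Q_{MY^iZ_{i+1}^n})` are finite. -/
theorem telescoping_klDiv {M Y Z : Type*} [Fintype M] [Fintype Y] [Fintype Z] (n : ℕ)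
    (P Q : M × (Fin n → Y) × (Fin n → Z) → ℝ) (hP : IsPMF P) (hQ : IsPMF Q)
    (hfin : ∀ i : ℕ, i ≤ n →
      klDiv
        (pushf P (fun w => (w.1, fun j : {j : Fin n // (j : ℕ) < i} => w.2.1 j.1,
          fun j : {j : Fin n // i ≤ (j : ℕ)} => w.2.2 j.1)))
        (pushf Q (fun w => (w.1, fun j : {j : Fin n // (j : ℕ) < i} => w.2.1 j.1,
          fun j : {j : Fin n // i ≤ (j : ℕ)} => w.2.2 j.1))) < ⊤) :
    klDiv (pushf P (fun w => (w.1, w.2.1))) (pushf Q (fun w => (w.1, w.2.1)))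
      - klDiv (pushf P (fun w => (w.1, w.2.2))) (pushf Q (fun w => (w.1, w.2.2)))
    = ∑ i : Fin n,
        (klDiv
            (pushf P (fun w => ((w.1, fun j : {j : Fin n // (j : ℕ) < (i : ℕ)} => w.2.1 j.1,
              fun j : {j : Fin n // (i : ℕ) < (j : ℕ)} => w.2.2 j.1), w.2.1 i)))
            (pushf Q (fun w => ((w.1, fun j : {j : Fin n // (j : ℕ) < (i : ℕ)} => w.2.1 j.1,
              fun j : {j : Fin n // (i : ℕ) < (j : ℕ)} => w.2.2 j.1), w.2.1 i)))
          - klDiv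
            (pushf P (fun w => ((w.1, fun j : {j : Fin n // (j : ℕ) < (i : ℕ)} => w.2.1 j.1,
              fun j : {j : Fin n // (i : ℕ) < (j : ℕ)} => w.2.2 j.1), w.2.2 i)))
            (pushf Q (fun w => ((w.1, fun j : {j : Fin n // (j : ℕ) < (i : ℕ)} => w.2.1 j.1,
              fun j : {j : Fin n // (i : ℕ) < (j : ℕ)} => w.2.2 j.1), w.2.2 i)))) := by
  exact telescoping_klDiv_general (fun w ↦ ⟨P w, hP.1 w⟩) (fun w ↦ ⟨Q w, hQ.1 w⟩) Prod.fst
    (fun j w ↦ w.2.1 j) (fun j w ↦ w.2.2 j) hfin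

end
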